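/- Let r ≥ 2 be an integer and λ_0 ∈ [0,1]. If there exists a sequence (P_t)_{t=1}^∞ of r-patterns which is a non-jump sequence on λ_0, then λ_0 is a non-jump for r. -/

import Mathlib

/-!
The Lagrange polynomial `λ_E(x)` is the probability that `r` independent `x`-distributed indices
form a multiset of `E` (`lagrangePoly_eq_sum_tuples`). This yields two facts about blow-ups of a
pattern `E` along a map `f` from vertices to indices.

* A random `f` gives a blow-up of expected density exactly `λ_E(x)`, so for every `n` some blow-up
  on `n` vertices has density at least `λ_E(x)` (`exists_blowUp`).
* If `H` is a subgraph of a blow-up on a set `W` of `M` vertices, the distribution of `f` on `W` is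
  supported on a set `S` of at most `M` indices, so `r! |H| / M ^ r ≤ λ(P[S])`
  (`card_le_lagrangePoly`, `lagrangePoly_le_subFamily`).

Suppose `l` is a jump with constant `c`. Fix `M` so large that density `l + c` on `M` vertices
forces `r! |H| / M ^ r > l` (`exists_choose_large`), and take a pattern `P_t` from the tail of the
sequence belonging to `k = M`, with at least `M` indices. Such a `t` exists because the finitely
many patterns on fewer than `M` indices cannot have Lagrangians tending to `l` strictly from above
(`exists_large_index`). As `λ(P_t) > l`, large blow-ups of `P_t` have density bounded away from `l`
from above, so the jump gives a subgraph on `M` vertices of density at least `l + c`. Hence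
`λ(P_t[S]) > l` for some `S` of size `M`, contradicting the choice of `P_t`.
-/

open Filter Topology

noncomputable section

/-- The Lagrange polynomial `λ_𝓔` of a family `E` of `r`-multisets on the index type `ι`:
`λ_𝓔(x) = r! · ∑_{E ∈ 𝓔} ∏_i x_i^{E(i)} / E(i)!`. -/
def lagrangePoly {ι : Type} [Fintype ι] [DecidableEq ι]
    (r : ℕ) (E : Finset (Multiset ι)) (x : ι → ℝ) : ℝ :=
  (Nat.factorial r : ℝ) *
    ∑ e ∈ E, ∏ i, x i ^ (Multiset.count i e) / ((Multiset.count i e).factorial : ℝ)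

/-- The Lagrangian `λ(P)` of a pattern `P = (ι, E)`: the maximum of the Lagrange polynomial
over the standard simplex. -/
def patternLagrangian {ι : Type} [Fintype ι] [DecidableEq ι]
    (r : ℕ) (E : Finset (Multiset ι)) : ℝ :=
  sSup (lagrangePoly r E '' stdSimplex ℝ ι)

/-- The family `𝓔[S]` of the induced subpattern `P[S]`, consisting of those multisets of `E`
all of whose elements lie in `S`, relabelled as multisets on the subtype `{i // i ∈ S}`. -/
def subFamily {ι : Type} [DecidableEq ι] (E : Finset (Multiset ι)) (S : Finset ι) :
    Finset (Multiset {i : ι // i ∈ S}) := by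
  classical
  exact (E.filter (fun e => ∀ i ∈ e, i ∈ S)).image
    (fun e => Multiset.filterMap
      (fun i => if h : i ∈ S then some (⟨i, h⟩ : {i : ι // i ∈ S}) else none) e)

/-- A pattern is minimal if removing any index strictly decreases the Lagrangian.
(`P - i` is exactly the induced subpattern on `univ.erase i`.) -/
def IsMinimalPattern {ι : Type} [Fintype ι] [DecidableEq ι] (r : ℕ)
    (E : Finset (Multiset ι)) : Prop :=
  ∀ i : ι, patternLagrangian r (subFamily E (Finset.univ.erase i)) < patternLagrangian r E

/-- Index set of the union `P₁ ⊕_i P₂`: index `i` of `ι₁` is replaced by a copy of `ι₂`. -/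
abbrev unionIndex (ι₁ ι₂ : Type) (i : ι₁) : Type := {j : ι₁ // j ≠ i} ⊕ ι₂

/-- Projection of the union index set back to `ι₁` (collapsing the copy of `ι₂` to `i`). -/
def unionProj {ι₁ ι₂ : Type} (i : ι₁) : unionIndex ι₁ ι₂ i → ι₁ :=
  Sum.elim (fun j => j.1) (fun _ => i)

/-- The family `𝓔̂` of the union `P₁ ⊕_i P₂`: an `r`-multiset on the new index set belongs to
`𝓔̂` iff its projection to `ι₁` belongs to `E₁` (cases (b),(c)), or it is a copy of a member
of `E₂` lying inside the copy of `ι₂` (case (a)). -/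
def unionFamily {ι₁ ι₂ : Type} [Fintype ι₁] [Fintype ι₂] [DecidableEq ι₁] [DecidableEq ι₂]
    (r : ℕ) (E₁ : Finset (Multiset ι₁)) (E₂ : Finset (Multiset ι₂)) (i : ι₁) :
    Finset (Multiset (unionIndex ι₁ ι₂ i)) := by
  classical
  exact Finset.image (fun R : Sym (unionIndex ι₁ ι₂ i) r => (R : Multiset (unionIndex ι₁ ι₂ i)))
    ((Finset.univ.sym r).filter
      (fun R : Sym (unionIndex ι₁ ι₂ i) r =>
        Multiset.map (unionProj i) (R : Multiset (unionIndex ι₁ ι₂ i)) ∈ E₁ ∨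
        ∃ e ∈ E₂, (R : Multiset (unionIndex ι₁ ι₂ i)) = Multiset.map Sum.inr e))

/-- Index set of the union `P₁ ⊕_T P₂`: each index of `T` is replaced by a copy of `ι₂`. -/
abbrev unionIndexT (ι₁ ι₂ : Type) (T : Finset ι₁) : Type :=
  {j : ι₁ // j ∉ T} ⊕ ({j : ι₁ // j ∈ T} × ι₂)

/-- Projection of the union index set back to `ι₁`. -/
def unionProjT {ι₁ ι₂ : Type} (T : Finset ι₁) : unionIndexT ι₁ ι₂ T → ι₁ :=
  Sum.elim (fun j => j.1) (fun p => p.1.1)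

/-- The family `𝓔̂` of the union `P₁ ⊕_T P₂`. -/
def unionFamilyT {ι₁ ι₂ : Type} [Fintype ι₁] [Fintype ι₂] [DecidableEq ι₁] [DecidableEq ι₂]
    (r : ℕ) (E₁ : Finset (Multiset ι₁)) (E₂ : Finset (Multiset ι₂)) (T : Finset ι₁) :
    Finset (Multiset (unionIndexT ι₁ ι₂ T)) := by
  classical
  exact Finset.image (fun R : Sym (unionIndexT ι₁ ι₂ T) r => (R : Multiset (unionIndexT ι₁ ι₂ T)))
    ((Finset.univ.sym r).filter
      (fun R : Sym (unionIndexT ι₁ ι₂ T) r =>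
        Multiset.map (unionProjT T) (R : Multiset (unionIndexT ι₁ ι₂ T)) ∈ E₁ ∨
        ∃ i : {j : ι₁ // j ∈ T}, ∃ e ∈ E₂,
          (R : Multiset (unionIndexT ι₁ ι₂ T)) = Multiset.map (fun k => Sum.inr (i, k)) e))

/-- The pattern `P_G` associated with an `r`-graph `G`: its multisets are the edges of `G`. -/
def graphPattern {V : Type} [DecidableEq V] (G : Finset (Finset V)) : Finset (Multiset V) :=
  G.image Finset.val

/-- The Lagrangian `λ(G)` of an `r`-graph `G`. -/
def graphLagrangian {V : Type} [Fintype V] [DecidableEq V] (r : ℕ) (G : Finset (Finset V)) : ℝ :=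
  patternLagrangian r (graphPattern G)

/-- `α` is a jump for `r`. -/
def IsJump (r : ℕ) (α : ℝ) : Prop :=
  ∃ c : ℝ, 0 < c ∧ ∀ ε : ℝ, 0 < ε → ∀ m : ℕ, r ≤ m → ∃ n₀ : ℕ, ∀ n : ℕ, n₀ ≤ n →
    ∀ G : Finset (Finset (Fin n)), (∀ e ∈ G, e.card = r) →
      α + ε ≤ (G.card : ℝ) / (n.choose r : ℝ) →
      ∃ W : Finset (Fin n), W.card = m ∧ ∃ H ⊆ G, (∀ e ∈ H, e ⊆ W) ∧
        α + c ≤ (H.card : ℝ) / (m.choose r : ℝ)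

/-- `G` contains a copy of `F` as a subgraph. -/
def GraphContains {n k : ℕ} (G : Finset (Finset (Fin n))) (F : Finset (Finset (Fin k))) : Prop :=
  ∃ φ : Fin k → Fin n, Function.Injective φ ∧ ∀ e ∈ F, e.image φ ∈ G

/-- The Turán number `ex(n, 𝓕)` for a family `𝓕` of graphs, among `r`-uniform hosts. -/
def exNum (r n : ℕ) (𝓕 : Set (Σ k : ℕ, Finset (Finset (Fin k)))) : ℕ :=
  sSup {c : ℕ | ∃ G : Finset (Finset (Fin n)), (∀ e ∈ G, e.card = r) ∧
    (∀ F ∈ 𝓕, ¬ GraphContains G F.2) ∧ G.card = c}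

/-- `Π_∞^{(r)}`: the set of Turán densities of (possibly infinite) families of `r`-graphs. -/
def turanDensitySet (r : ℕ) : Set ℝ :=
  {x | ∃ 𝓕 : Set (Σ k : ℕ, Finset (Finset (Fin k))),
    (∀ F ∈ 𝓕, ∀ e ∈ F.2, e.card = r) ∧
    Tendsto (fun n => (exNum r n 𝓕 : ℝ) / (n.choose r : ℝ)) atTop (nhds x)}

/-- `Λ^{(r)}`: the set of Lagrangians of `r`-graphs. -/
def lambdaSet (r : ℕ) : Set ℝ :=
  {x | ∃ (n : ℕ) (G : Finset (Finset (Fin n))), (∀ e ∈ G, e.card = r) ∧ graphLagrangian r G = x}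

/-- The tail `(P_t)_{t ≥ t₀}` of a sequence of patterns is a `(k, l)`-sequence. -/
def IsKLambdaSeqFrom (r k t₀ : ℕ) (l : ℝ) (ι : ℕ → Type)
    [∀ t, Fintype (ι t)] [∀ t, DecidableEq (ι t)]
    (𝓔 : ∀ t, Finset (Multiset (ι t))) : Prop :=
  ∃ ε : ℕ → ℝ,
    (∀ t, t₀ ≤ t → 0 < ε t) ∧
    Tendsto (fun t => patternLagrangian r (𝓔 t)) atTop (nhds l) ∧
    (∀ t, t₀ ≤ t → l + ε t ≤ patternLagrangian r (𝓔 t)) ∧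
    (∀ t, t₀ ≤ t → ∀ S : Finset (ι t), S.card = k →
      patternLagrangian r (subFamily (𝓔 t) S) ≤ l)

/-- A `(k, l)`-sequence of patterns. -/
def IsKLambdaSeq (r k : ℕ) (l : ℝ) (ι : ℕ → Type)
    [∀ t, Fintype (ι t)] [∀ t, DecidableEq (ι t)]
    (𝓔 : ∀ t, Finset (Multiset (ι t))) : Prop :=
  IsKLambdaSeqFrom r k 0 l ι 𝓔

/-- A non-jump sequence of patterns on `l`: for every `k > 0` some tail is a
`(k, l)`-sequence. -/
def IsNonJumpSeq (r : ℕ) (l : ℝ) (ι : ℕ → Type)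
    [∀ t, Fintype (ι t)] [∀ t, DecidableEq (ι t)]
    (𝓔 : ∀ t, Finset (Multiset (ι t))) : Prop :=
  ∀ k : ℕ, 0 < k → ∃ t₀ : ℕ, IsKLambdaSeqFrom r k t₀ l ι 𝓔

/-- The family of all `r`-multisets on `Fin m` except the `m` constant ones. -/
def allButConstant (m r : ℕ) : Finset (Multiset (Fin m)) := by
  classical
  exact ((Finset.univ.sym r).image (fun s : Sym (Fin m) r => (s : Multiset (Fin m)))).filter
    (fun e => ¬ ∃ i : Fin m, e = Multiset.replicate r i)

end

/-! ### The Lagrange polynomial as a sum over tuples -/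

/-- The number of `r`-tuples listing a given `r`-multiset `e` is `r! / ∏ e(i)!`. -/
lemma card_tuples_mul {ι : Type} [Fintype ι] [DecidableEq ι] (r : ℕ) (e : Multiset ι)
    (he : Multiset.card e = r) :
    (Finset.univ.filter (fun g : Fin r → ι => Finset.univ.val.map g = e)).card *
      ∏ i, (e.count i).factorial = r.factorial := by
  -- The tuple count and the multinomial coefficient are both the coefficient of the monomial
  -- of `e` in `(∑ X_i) ^ r`.
  have h1 : MvPolynomial.coeff (Multiset.toFinsupp e)
      ((∑ i : ι, (MvPolynomial.X i : MvPolynomial ι ℕ)) ^ r) =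
      (Finset.univ.filter (fun g : Fin r → ι => Finset.univ.val.map g = e)).card := by
    rw [Fintype.sum_pow, MvPolynomial.coeff_sum, Finset.card_filter]
    refine Finset.sum_congr rfl fun g _ => ?_
    have : ∏ j, (MvPolynomial.X (g j) : MvPolynomial ι ℕ) =
        MvPolynomial.monomial (Multiset.toFinsupp (Finset.univ.val.map g)) 1 := by
      have h2 : Multiset.toFinsupp (Finset.univ.val.map g) = ∑ j, Finsupp.single (g j) 1 := by
        have h3 : (Finset.univ.val.map g) = ∑ j, ({g j} : Multiset ι) := by
          rw [Finset.sum, ← Multiset.sum_map_singleton (Finset.univ.val.map g), Multiset.map_map]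
          rfl
        rw [h3, map_sum]
        simp [Multiset.toFinsupp_singleton]
      rw [h2, MvPolynomial.monomial_sum_one]
      rfl
    rw [this, MvPolynomial.coeff_monomial]
    simp
  have hsum : ∑ i, e.count i = r := by
    rw [← he]
    exact Multiset.sum_count_eq_card (by simp)
  rw [← h1, MvPolynomial.coeff_sum_X_pow_of_fintype, if_pos,
    Finsupp.multinomial_eq_of_support_subset (Finset.subset_univ _), mul_comm]
  · have := Nat.multinomial_spec Finset.univ (fun i => e.count i)
    rw [hsum] at this
    exact this
  · rw [Finsupp.sum_fintype _ _ (by simp)]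
    simpa using hsum

/-- The Lagrange polynomial is a sum over ordered tuples: `λ_E(x)` is the probability that `r`
independent `x`-distributed indices form a multiset of `E`. -/
lemma lagrangePoly_eq_sum_tuples {ι : Type} [Fintype ι] [DecidableEq ι] (r : ℕ)
    (E : Finset (Multiset ι)) (hE : ∀ e ∈ E, Multiset.card e = r) (x : ι → ℝ) :
    lagrangePoly r E x =
      ∑ g : Fin r → ι, if Finset.univ.val.map g ∈ E then ∏ j, x (g j) else 0 := by
  have key : ∀ e ∈ E, (r.factorial : ℝ) *
      ∏ i, x i ^ (Multiset.count i e) / ((Multiset.count i e).factorial : ℝ) =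
      ∑ g : Fin r → ι, if Finset.univ.val.map g = e then ∏ j, x (g j) else 0 := by
    intro e he
    have h1 : ∀ g : Fin r → ι, (if Finset.univ.val.map g = e then ∏ j, x (g j) else 0) =
        if Finset.univ.val.map g = e then ∏ i, x i ^ (e.count i) else 0 := by
      intro g
      split_ifs with hg
      · have h2 : (e.map x).prod = ∏ i, x i ^ (e.count i) := by
          rw [Finset.prod_multiset_map_count]
          refine Finset.prod_subset (Finset.subset_univ _) fun i _ hi => ?_
          rw [Multiset.count_eq_zero_of_notMem (by simpa using hi), pow_zero]
        rw [← h2, ← hg, Multiset.map_map]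
        rfl
      · rfl
    rw [Finset.sum_congr rfl fun g _ => h1 g, ← Finset.sum_filter, Finset.sum_const,
      nsmul_eq_mul, ← card_tuples_mul r e (hE e he), Finset.prod_div_distrib]
    push_cast
    have : (∏ i, ((e.count i).factorial : ℝ)) ≠ 0 :=
      Finset.prod_ne_zero_iff.2 fun i _ => by positivity
    field_simp
  rw [lagrangePoly, Finset.mul_sum, Finset.sum_congr rfl key, Finset.sum_comm]
  refine Finset.sum_congr rfl fun g _ => ?_
  simp

/-! ### Dense blow-ups -/

/-- Marginals of a product distribution: if `f : Fin n → ι` has independent `x`-distributed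
values, then so does `f ∘ u` for every injective `u`. -/
lemma sum_weight_comp {ι : Type} [Fintype ι] [DecidableEq ι] {r n : ℕ} (x : ι → ℝ)
    (hx : ∑ i, x i = 1) (u : Fin r → Fin n) (hu : Function.Injective u)
    (φ : (Fin r → ι) → ℝ) :
    ∑ f : Fin n → ι, (∏ v, x (f v)) * φ (f ∘ u) = ∑ g : Fin r → ι, (∏ j, x (g j)) * φ g := by
  rw [← Finset.sum_fiberwise Finset.univ (fun f : Fin n → ι => f ∘ u)]
  refine Finset.sum_congr rfl fun g _ => ?_
  have h1 : ∀ f ∈ Finset.univ.filter (fun f : Fin n → ι => f ∘ u = g),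
      (∏ v, x (f v)) * φ (f ∘ u) = (∏ v, x (f v)) * φ g := by
    intro f hf
    rw [(Finset.mem_filter.1 hf).2]
  rw [Finset.sum_congr rfl h1, ← Finset.sum_mul]
  congr 1
  let t : Fin n → Finset ι := fun v => Finset.univ.filter (fun i => ∀ j, u j = v → g j = i)
  have h2 : Finset.univ.filter (fun f : Fin n → ι => f ∘ u = g) = Fintype.piFinset t := by
    ext f
    simp only [Finset.mem_filter, Finset.mem_univ, true_and, Fintype.mem_piFinset, t]
    constructor
    · rintro rfl v j rfl
      rfl
    · intro h
      funext j
      exact (h (u j) j rfl).symm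
  rw [h2, ← Finset.prod_univ_sum t (fun _ i => x i)]
  have h3 : ∀ j, ∑ i ∈ t (u j), x i = x (g j) := by
    intro j
    have : t (u j) = {g j} := by
      ext i
      simp only [t, Finset.mem_filter, Finset.mem_univ, true_and, Finset.mem_singleton]
      constructor
      · intro h
        exact (h j rfl).symm
      · rintro rfl j' hj'
        rw [hu hj']
    simp [this]
  rw [← Finset.prod_subset (Finset.subset_univ (Finset.univ.image u)),
    Finset.prod_image hu.injOn, Finset.prod_congr rfl fun j _ => h3 j]
  intro v _ hv
  have : t v = Finset.univ := by
    ext i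
    simp only [t, Finset.mem_filter, Finset.mem_univ, true_and, iff_true]
    intro j hj
    exact absurd (Finset.mem_image.2 ⟨j, Finset.mem_univ _, hj⟩) hv
  rw [this, hx]

/-- The blow-up of the pattern `E` along `f : Fin n → ι`: the `r`-graph on `Fin n` whose edges
are the `r`-sets that `f` maps onto a multiset of `E`. -/
def blowUp {ι : Type} [DecidableEq ι] (r n : ℕ) (E : Finset (Multiset ι)) (f : Fin n → ι) :
    Finset (Finset (Fin n)) :=
  (Finset.univ.powersetCard r).filter (fun e => e.val.map f ∈ E)

/-- Under a random assignment with distribution `x`, the expected number of edges of the blow-up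
is `C(n, r) λ_E(x)`, so some blow-up has density at least `λ_E(x)`. -/
lemma exists_blowUp {ι : Type} [Fintype ι] [DecidableEq ι] (r n : ℕ)
    (E : Finset (Multiset ι)) (hE : ∀ e ∈ E, Multiset.card e = r) (x : ι → ℝ)
    (hx : x ∈ stdSimplex ℝ ι) :
    ∃ f : Fin n → ι, lagrangePoly r E x * (n.choose r : ℝ) ≤ ((blowUp r n E f).card : ℝ) := by
  obtain ⟨hx0, hx1⟩ := hx
  have hne : Nonempty ι := by
    by_contra h
    rw [not_nonempty_iff] at h
    simp at hx1
  obtain ⟨f₀, hf₀⟩ := Finite.exists_max (fun f : Fin n → ι => ((blowUp r n E f).card : ℝ))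
  refine ⟨f₀, ?_⟩
  have hw : ∑ f : Fin n → ι, ∏ v, x (f v) = 1 := by
    rw [← Fintype.sum_pow, hx1, one_pow]
  have hedge : ∀ e ∈ (Finset.univ : Finset (Fin n)).powersetCard r,
      ∑ f : Fin n → ι, (∏ v, x (f v)) * (if e.val.map f ∈ E then (1 : ℝ) else 0) =
        lagrangePoly r E x := by
    intro e he
    have hc : e.card = r := (Finset.mem_powersetCard.1 he).2
    have hu : (Finset.univ.val.map (e.orderEmbOfFin hc) : Multiset (Fin n)) = e.val := by
      exact congrArg Finset.val (Finset.map_orderEmbOfFin_univ e hc)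
    have h2 := sum_weight_comp x hx1 (e.orderEmbOfFin hc) (e.orderEmbOfFin hc).injective
      (fun g => if Finset.univ.val.map g ∈ E then (1 : ℝ) else 0)
    rw [lagrangePoly_eq_sum_tuples r E hE]
    simp only [← Multiset.map_map, hu, mul_ite, mul_one, mul_zero] at h2 ⊢
    exact h2
  calc lagrangePoly r E x * (n.choose r : ℝ)
      = ∑ e ∈ (Finset.univ : Finset (Fin n)).powersetCard r, ∑ f : Fin n → ι,
          (∏ v, x (f v)) * (if e.val.map f ∈ E then (1 : ℝ) else 0) := by
        rw [Finset.sum_congr rfl hedge]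
        simp [mul_comm]
    _ = ∑ f : Fin n → ι, (∏ v, x (f v)) * ((blowUp r n E f).card : ℝ) := by
        rw [Finset.sum_comm]
        refine Finset.sum_congr rfl fun f _ => ?_
        rw [← Finset.mul_sum, blowUp, Finset.card_filter]
        push_cast
        rfl
    _ ≤ ∑ f : Fin n → ι, (∏ v, x (f v)) * ((blowUp r n E f₀).card : ℝ) :=
        Finset.sum_le_sum fun f _ =>
          mul_le_mul_of_nonneg_left (hf₀ f) (Finset.prod_nonneg fun v _ => hx0 _)
    _ = ((blowUp r n E f₀).card : ℝ) := by
        rw [← Finset.sum_mul, hw, one_mul]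

/-! ### Lagrangians of small pieces of a blow-up -/

lemma bddAbove_lagrangePoly {ι : Type} [Fintype ι] [DecidableEq ι] (r : ℕ)
    (E : Finset (Multiset ι)) : BddAbove (lagrangePoly r E '' stdSimplex ℝ ι) := by
  refine ((isCompact_stdSimplex ℝ ι).image ?_).bddAbove
  unfold lagrangePoly
  fun_prop

/-- A point of the simplex supported on `S` is a feasible point for `P[S]`. -/
lemma lagrangePoly_le_subFamily {ι : Type} [Fintype ι] [DecidableEq ι] (r : ℕ)
    (E : Finset (Multiset ι)) (S : Finset ι) (y : ι → ℝ) (hy : y ∈ stdSimplex ℝ ι)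
    (hS : ∀ i, i ∉ S → y i = 0) :
    lagrangePoly r E y ≤ patternLagrangian r (subFamily E S) := by
  classical
  let F : Multiset ι → Multiset {i : ι // i ∈ S} := fun e => Multiset.filterMap
      (fun i => if h : i ∈ S then some (⟨i, h⟩ : {i : ι // i ∈ S}) else none) e
  have hF : ∀ e : Multiset ι, (∀ i ∈ e, i ∈ S) → (F e).map Subtype.val = e := by
    intro e
    induction e using Multiset.induction with
    | empty => simp [F]
    | cons a e ih =>
      intro he
      have ha : a ∈ S := he a (Multiset.mem_cons_self a e)
      have hFa : F (a ::ₘ e) = ⟨a, ha⟩ ::ₘ F e :=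
        Multiset.filterMap_cons_some _ a e (by simp [ha])
      rw [hFa, Multiset.map_cons, ih fun i hi => he i (Multiset.mem_cons_of_mem hi)]
  have hy' : (fun i : {i : ι // i ∈ S} => y i) ∈ stdSimplex ℝ {i : ι // i ∈ S} := by
    refine ⟨fun i => hy.1 i, ?_⟩
    rw [← hy.2, ← Finset.sum_subset (Finset.subset_univ S) fun i _ hi => hS i hi]
    exact Finset.sum_coe_sort S y
  have heq : lagrangePoly r E y =
      lagrangePoly r (subFamily E S) (fun i : {i : ι // i ∈ S} => y i) := by
    unfold lagrangePoly
    congr 1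
    have hsub : subFamily E S = (E.filter (fun e => ∀ i ∈ e, i ∈ S)).image F := by
      ext
      simp [subFamily, F]
    rw [hsub, Finset.sum_image, Finset.sum_filter]
    · refine Finset.sum_congr rfl fun e _ => ?_
      split_ifs with he
      · rw [← Finset.prod_subset (Finset.subset_univ S), ← Finset.prod_coe_sort S]
        · refine Finset.prod_congr rfl fun i _ => ?_
          have : Multiset.count (i : ι) e = Multiset.count i (F e) := by
            conv_lhs => rw [← hF e he]
            exact Multiset.count_map_eq_count' _ _ Subtype.val_injective _
          rw [this]
        · intro i _ hi
          rw [Multiset.count_eq_zero_of_notMem fun h => hi (he i h)]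
          simp
      · push Not at he
        obtain ⟨i, hi, hiS⟩ := he
        refine Finset.prod_eq_zero (Finset.mem_univ i) ?_
        rw [hS i hiS, zero_pow (Multiset.count_ne_zero.2 hi), zero_div]
    · intro a ha b hb hab
      rw [Finset.mem_coe, Finset.mem_filter] at ha hb
      rw [← hF a ha.2, ← hF b hb.2, hab]
  rw [heq]
  exact le_csSup (bddAbove_lagrangePoly r _) ⟨_, hy', rfl⟩

/-- If a subgraph `H` of a blow-up of `E` lives on a vertex set `W`, then the distribution of
`f` on a uniform vertex of `W` gives `λ_E` at least `r! |H| / |W| ^ r`: each edge of `H`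
corresponds to `r!` tuples of vertices of `W` that `f` maps into `E`. -/
lemma card_le_lagrangePoly {ι : Type} [Fintype ι] [DecidableEq ι] (r n : ℕ)
    (E : Finset (Multiset ι)) (hE : ∀ e ∈ E, Multiset.card e = r) (f : Fin n → ι)
    (W : Finset (Fin n)) (hW : 0 < W.card) (H : Finset (Finset (Fin n)))
    (hHG : H ⊆ blowUp r n E f) (hHW : ∀ e ∈ H, e ⊆ W) :
    (r.factorial : ℝ) * H.card / (W.card : ℝ) ^ r ≤
      lagrangePoly r E (fun i => ((W.filter (fun v => f v = i)).card : ℝ) / W.card) := by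
  have hG : ∀ e ∈ H, e.card = r ∧ e.val.map f ∈ E := by
    intro e he
    have h := hHG he
    simp only [blowUp, Finset.mem_filter, Finset.mem_powersetCard] at h
    exact ⟨h.1.2, h.2⟩
  let T : Finset (Fin r → Fin n) :=
    H.biUnion (fun e => Finset.univ.filter (fun u => Finset.univ.val.map u = e.val))
  have hT : T.card = r.factorial * H.card := by
    rw [Finset.card_biUnion]
    · rw [mul_comm, ← smul_eq_mul, ← Finset.sum_const]
      refine Finset.sum_congr rfl fun e he => ?_
      rw [← card_tuples_mul r e.val (hG e he).1, Finset.prod_eq_one, mul_one]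
      intro i _
      have := Multiset.nodup_iff_count_le_one.1 e.nodup i
      interval_cases h : Multiset.count i e.val <;> rfl
    · intro a _ b _ hab
      rw [Function.onFun, Finset.disjoint_left]
      intro u hu hu'
      simp only [Finset.mem_filter, Finset.mem_univ, true_and] at hu hu'
      exact hab (Finset.val_injective (hu.symm.trans hu'))
  have hTmem : ∀ u ∈ T, (∀ j, u j ∈ W) ∧ Finset.univ.val.map (f ∘ u) ∈ E := by
    intro u hu
    obtain ⟨e, he, hue⟩ := Finset.mem_biUnion.1 hu
    simp only [Finset.mem_filter, Finset.mem_univ, true_and] at hue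
    refine ⟨fun j => hHW e he ?_, ?_⟩
    · rw [← Finset.mem_val, ← hue]
      exact Multiset.mem_map_of_mem u (Finset.mem_univ j)
    · rw [← Multiset.map_map, hue]
      exact (hG e he).2
  have hcount : (T.card : ℝ) ≤ ∑ g : Fin r → ι, if Finset.univ.val.map g ∈ E then
      ∏ j, ((W.filter (fun v => f v = g j)).card : ℝ) else 0 := by
    rw [Finset.card_eq_sum_card_fiberwise (f := fun u => f ∘ u) (t := Finset.univ)
      (fun _ _ => Finset.mem_coe.2 (Finset.mem_univ _))]
    push_cast
    refine Finset.sum_le_sum fun g _ => ?_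
    split_ifs with hg
    · rw [← Nat.cast_prod, ← Fintype.card_piFinset]
      refine Nat.cast_le.2 (Finset.card_le_card fun u hu => ?_)
      obtain ⟨huT, rfl⟩ := Finset.mem_filter.1 hu
      simp only [Fintype.mem_piFinset, Finset.mem_filter]
      exact fun j => ⟨(hTmem u huT).1 j, rfl⟩
    · rw [Finset.card_eq_zero.2, Nat.cast_zero]
      refine Finset.filter_eq_empty_iff.2 fun u huT h => hg ?_
      rw [← h]
      exact (hTmem u huT).2
  have hW' : (0 : ℝ) < (W.card : ℝ) ^ r := by positivity
  rw [hT] at hcount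
  push_cast at hcount
  rw [lagrangePoly_eq_sum_tuples r E hE, div_le_iff₀ hW', Finset.sum_mul]
  refine hcount.trans_eq (Finset.sum_congr rfl fun g _ => ?_)
  split_ifs with hg
  · rw [Finset.prod_div_distrib]
    simp only [Finset.prod_const, Finset.card_univ, Fintype.card_fin]
    rw [div_mul_cancel₀ _ hW'.ne']
  · simp

/-! ### Choosing the parameters -/

/-- Patterns on fewer than `k` indices have only finitely many Lagrangians, so Lagrangians that
tend to `l` from strictly above come from patterns on unboundedly many indices. -/
lemma exists_large_index (r k t₀ : ℕ) (l : ℝ) (m : ℕ → ℕ)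
    (𝓔 : ∀ t, Finset (Multiset (Fin (m t))))
    (h𝓔 : ∀ t, ∀ e ∈ 𝓔 t, Multiset.card e = r)
    (hlim : Tendsto (fun t => patternLagrangian r (𝓔 t)) atTop (nhds l))
    (hgt : ∀ t, t₀ ≤ t → l < patternLagrangian r (𝓔 t)) :
    ∃ t, t₀ ≤ t ∧ k ≤ m t := by
  by_contra! hcon
  let A : Set ℝ := ⋃ j : Fin k, (fun E : Finset (Multiset (Fin j)) => patternLagrangian r E) ''
    {E | ∀ e ∈ E, Multiset.card e = r}
  have hA : A.Finite := by
    refine Set.finite_iUnion fun j => Set.Finite.image _ ?_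
    refine (((Finset.univ : Finset (Sym (Fin j) r)).image
      (fun s : Sym (Fin j) r => (s : Multiset (Fin j)))).powerset.finite_toSet).subset ?_
    intro E hE
    rw [Finset.mem_coe, Finset.mem_powerset]
    intro e he
    exact Finset.mem_image.2 ⟨⟨e, hE e he⟩, Finset.mem_univ _, rfl⟩
  have hB : (A ∩ Set.Ioi l).Finite := hA.subset Set.inter_subset_left
  have hmem : l ∈ A ∩ Set.Ioi l := by
    refine hB.isClosed.mem_of_tendsto hlim ?_
    filter_upwards [eventually_ge_atTop t₀] with t ht
    exact ⟨Set.mem_iUnion.2 ⟨⟨m t, hcon t ht⟩, 𝓔 t, h𝓔 t, rfl⟩, hgt t ht⟩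
  exact lt_irrefl l hmem.2

/-- Since `r! C(M, r) / M ^ r → 1`, a graph on `M` vertices of density at least `l + c` has
`r! |H| / M ^ r > l` once `M` is large. -/
lemma exists_choose_large (r : ℕ) (l c : ℝ) (hc : 0 < c) :
    ∃ M : ℕ, r ≤ M ∧ 0 < M ∧
      l < (r.factorial : ℝ) * ((l + c) * (M.choose r : ℝ)) / (M : ℝ) ^ r := by
  have h1 : Tendsto (fun n : ℕ => (n.choose r : ℝ) / ((n : ℝ) ^ r / r.factorial)) atTop
      (nhds 1) := by
    refine (Asymptotics.isEquivalent_iff_tendsto_one ?_).1 (isEquivalent_choose r)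
    filter_upwards [eventually_gt_atTop 0] with n hn
    positivity
  have h2 := h1.const_mul (l + c)
  rw [mul_one] at h2
  have h3 := h2.eventually (lt_mem_nhds (show l < l + c by linarith))
  obtain ⟨M, hM, hMr, hM0⟩ :=
    (h3.and ((eventually_ge_atTop r).and (eventually_gt_atTop 0))).exists
  refine ⟨M, hMr, hM0, hM.trans_eq ?_⟩
  field_simp

/-- If there is a non-jump sequence of `r`-patterns on `λ₀`, then `λ₀` is a
non-jump for `r`. -/
theorem not_isJump_of_nonJumpSeq (r : ℕ) (hr : 2 ≤ r) (l : ℝ) (hl : l ∈ Set.Icc (0:ℝ) 1)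
    (m : ℕ → ℕ) (𝓔 : ∀ t, Finset (Multiset (Fin (m t))))
    (h𝓔 : ∀ t, ∀ e ∈ 𝓔 t, Multiset.card e = r)
    (hseq : IsNonJumpSeq r l (fun t => Fin (m t)) 𝓔) :
    ¬ IsJump r l := by

  rintro ⟨c, hc, hjump⟩
  obtain ⟨M, hMr, hM0, hM⟩ := exists_choose_large r l c hc
  obtain ⟨t₀, ε, hε, hlim, hlow, hsub⟩ := hseq M hM0
  obtain ⟨t, ht, hMt⟩ := exists_large_index r M t₀ l m 𝓔 h𝓔 hlim
    fun t ht => by linarith [hε t ht, hlow t ht]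
  have hεt := hε t ht
  have hlt : l + ε t / 2 < patternLagrangian r (𝓔 t) := by linarith [hlow t ht]
  -- The simplex is nonempty: otherwise the Lagrangian would be `sSup ∅ = 0 ≤ l`.
  have hne : (lagrangePoly r (𝓔 t) '' stdSimplex ℝ (Fin (m t))).Nonempty := by
    by_contra h
    rw [Set.not_nonempty_iff_eq_empty] at h
    rw [patternLagrangian, h, Real.sSup_empty] at hlt
    linarith [hl.1]
  obtain ⟨_, ⟨x, hx, rfl⟩, hxl⟩ := exists_lt_of_lt_csSup hne hlt
  obtain ⟨n₀, hn₀⟩ := hjump (ε t / 2) (by linarith) M hMr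
  obtain ⟨f, hf⟩ := exists_blowUp r (max n₀ r) (𝓔 t) (h𝓔 t) x hx
  have hchoose : (0 : ℝ) < ((max n₀ r).choose r : ℝ) :=
    Nat.cast_pos.2 (Nat.choose_pos (le_max_right _ _))
  obtain ⟨W, hWM, H, hHG, hHW, hH⟩ := hn₀ (max n₀ r) (le_max_left _ _)
    (blowUp r (max n₀ r) (𝓔 t) f)
    (fun e he => (Finset.mem_powersetCard.1 (Finset.mem_filter.1 he).1).2)
    (by
      rw [le_div_iff₀ hchoose]
      exact (mul_le_mul_of_nonneg_right hxl.le hchoose.le).trans hf)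
  have hcard := card_le_lagrangePoly r _ (𝓔 t) (h𝓔 t) f W (hWM ▸ hM0) H hHG hHW
  -- `f` takes at most `M` values on `W`; enlarge this set of values to one of size `M`.
  obtain ⟨S, hWS, hSM⟩ := Finset.exists_superset_card_eq (s := W.image f) (n := M)
    (Finset.card_image_le.trans hWM.le) (by simpa using hMt)
  have hM0' : (0 : ℝ) < M := Nat.cast_pos.2 hM0
  have hle := lagrangePoly_le_subFamily r (𝓔 t) S
    (fun i => ((W.filter (fun v => f v = i)).card : ℝ) / W.card)
    ⟨fun i => by positivity, by
      rw [← Finset.sum_div, ← Nat.cast_sum, ← Finset.card_eq_sum_card_fiberwise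
        (fun _ _ => Finset.mem_coe.2 (Finset.mem_univ _)), hWM, div_self hM0'.ne']⟩
    (fun i hi => by
      rw [Finset.card_eq_zero.2, Nat.cast_zero, zero_div]
      exact Finset.filter_eq_empty_iff.2 fun v hv h =>
        hi (hWS (Finset.mem_image.2 ⟨v, hv, h⟩)))
  have hS := hsub t ht S hSM
  have hMchoose : (0 : ℝ) < (M.choose r : ℝ) := Nat.cast_pos.2 (Nat.choose_pos hMr)
  rw [le_div_iff₀ hMchoose] at hH
  have hfin : (r.factorial : ℝ) * ((l + c) * (M.choose r : ℝ)) / (M : ℝ) ^ r ≤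
      (r.factorial : ℝ) * H.card / (W.card : ℝ) ^ r := by
    rw [hWM]
    gcongr
  linarith
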